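/- Under the stated hypotheses on G, if n ≥ 10 then the eigenvector x satisfies x_k > x_1. -/

import Mathlib

open Matrix

/-- The signless Laplacian `Q(G) = D(G) + A(G)` of a finite simple graph `G`. -/
noncomputable def signlessLaplacian {V : Type*} [Fintype V] (G : SimpleGraph V) :
    Matrix V V ℝ :=
  letI := Classical.decEq V
  letI : DecidableRel G.Adj := Classical.decRel _
  Matrix.diagonal (fun v => (G.degree v : ℝ)) + G.adjMatrix ℝ

/-- The `Q`-index of `G`: the largest eigenvalue of the signless Laplacian `Q(G)`. -/
noncomputable def qIndex {V : Type*} [Fintype V] (G : SimpleGraph V) : ℝ :=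
  letI := Classical.decEq V
  sSup (spectrum ℝ (signlessLaplacian G))

/-!
Write the eigenvalue equation at a vertex as `(q - d(v)) x_v = ∑_{w ∼ v} x_w`; positivity of `x`
forces `q > d(v)`. For adjacent `u`, `v` the common neighbours cancel on subtracting the two
equations, so `d(u) < d(v)` gives `x_u < x_v` as soon as the entries at the neighbours of `u` not
shared with `v` sum to less than `x_u`. Here these neighbours are `v_0` and `v_2`, the tips of two
triangles at `u = v_1`. Adding their equations and using the one at `u` to bound the entries at the
third vertices of the triangles yields `x_{v_0} + x_{v_2} < x_u`.
-/

section PositiveEigenvector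

variable {V : Type*} [Fintype V] {G : SimpleGraph V} [DecidableRel G.Adj] {q : ℝ} {x : V → ℝ}

theorem signlessLaplacian_mulVec_apply (v : V) :
    (signlessLaplacian G).mulVec x v =
      G.degree v * x v + ∑ w ∈ G.neighborFinset v, x w := by
  simp only [signlessLaplacian, add_mulVec, Pi.add_apply, mulVec_diagonal,
    SimpleGraph.adjMatrix_mulVec_apply]
  congr!

theorem sub_degree_mul_eq_sum (heig : (signlessLaplacian G).mulVec x = q • x) (v : V) :
    (q - G.degree v) * x v = ∑ w ∈ G.neighborFinset v, x w := by
  have row : G.degree v * x v + ∑ w ∈ G.neighborFinset v, x w = q * x v := by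
    rw [← signlessLaplacian_mulVec_apply, heig, Pi.smul_apply, smul_eq_mul]
  linarith

theorem degree_lt_eigenvalue_of_adj (hpos : ∀ v, 0 < x v)
    (heig : (signlessLaplacian G).mulVec x = q • x) {v w : V} (hvw : G.Adj v w) :
    G.degree v < q := by
  have hsum : 0 < (q - G.degree v) * x v := by
    rw [sub_degree_mul_eq_sum heig]
    exact Finset.sum_pos (fun w _ ↦ hpos w) ⟨w, (G.mem_neighborFinset v w).2 hvw⟩
  exact sub_pos.1 (pos_of_mul_pos_left hsum (hpos v).le)

theorem sub_two_mul_eq_add_of_neighborFinset_eq_pair [DecidableEq V]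
    (heig : (signlessLaplacian G).mulVec x = q • x) {a u w : V} (huw : u ≠ w)
    (ha : G.neighborFinset a = {u, w}) : (q - 2) * x a = x u + x w := by
  have row := sub_degree_mul_eq_sum heig a
  rwa [← G.card_neighborFinset_eq_degree, ha, Finset.card_pair huw, Finset.sum_pair huw] at row

/-- `f a` is the third vertex of the triangle at `u` whose tip is `a ∈ E`. -/
theorem sum_lt_of_triangle_tips [DecidableEq V] (hpos : ∀ v, 0 < x v)
    (heig : (signlessLaplacian G).mulVec x = q • x) {u v : V} (huv : G.Adj u v)
    {E : Finset V} (hvE : v ∉ E) {f : V → V} (hinj : Set.InjOn f E)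
    (hf : ∀ a ∈ E, f a ∈ G.neighborFinset u \ insert v E)
    (hE : ∀ a ∈ E, G.neighborFinset a = {u, f a}) :
    ∑ a ∈ E, x a < x u := by
  have hadj : insert v E ⊆ G.neighborFinset u := by
    refine Finset.insert_subset ((G.mem_neighborFinset u v).2 huv) fun a ha ↦ ?_
    have hau : u ∈ G.neighborFinset a := by simp [hE a ha]
    simpa [G.adj_comm] using hau
  have hcard : (E.card : ℝ) + 1 ≤ G.degree u := by
    rw [← G.card_neighborFinset_eq_degree]
    exact_mod_cast (Finset.card_insert_of_notMem hvE).symm.trans_le (Finset.card_le_card hadj)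
  have tips : (q - 2) * ∑ a ∈ E, x a = E.card * x u + ∑ a ∈ E, x (f a) := by
    rw [Finset.mul_sum, ← nsmul_eq_mul, ← Finset.sum_const, ← Finset.sum_add_distrib]
    refine Finset.sum_congr rfl fun a ha ↦
      sub_two_mul_eq_add_of_neighborFinset_eq_pair heig ?_ (hE a ha)
    exact ((G.mem_neighborFinset u _).1 (Finset.mem_sdiff.1 (hf a ha)).1).ne
  have apexes : ∑ a ∈ E, x (f a) + x v + ∑ a ∈ E, x a ≤ (q - G.degree u) * x u := by
    rw [sub_degree_mul_eq_sum heig, ← Finset.sum_sdiff hadj, Finset.sum_insert hvE, add_assoc,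
      ← Finset.sum_image hinj]
    gcongr
    · exact fun w _ _ ↦ (hpos w).le
    · exact Finset.image_subset_iff.2 hf
  have hq : 0 < q - 1 := by
    linarith [degree_lt_eigenvalue_of_adj hpos heig huv, (Nat.cast_nonneg E.card : (0 : ℝ) ≤ _)]
  have hmul : (q - 1) * ∑ a ∈ E, x a < (q - 1) * x u := by
    calc (q - 1) * ∑ a ∈ E, x a
        < (q - (G.degree u - E.card)) * x u := by linarith [hpos v]
      _ ≤ (q - 1) * x u := by
        gcongr
        · exact (hpos u).le
        · linarith
  exact lt_of_mul_lt_mul_left hmul hq.le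

theorem lt_of_adj_of_degree_lt_of_sum_lt (hpos : ∀ v, 0 < x v)
    (heig : (signlessLaplacian G).mulVec x = q • x) {u v : V} (huv : G.Adj u v)
    (hdeg : G.degree u < G.degree v) {E : Finset V} (hE : ∑ a ∈ E, x a < x u)
    (hprivate : ∀ w, G.Adj u w → w = v ∨ w ∈ E ∨ G.Adj v w) :
    x u < x v := by
  classical
  have hsub : G.neighborFinset u \ E ⊆ insert v ((G.neighborFinset v).erase u) := by
    intro w hw
    obtain ⟨huw, hwE⟩ : G.Adj u w ∧ w ∉ E := by simpa using hw
    simpa [huw.ne', hwE] using hprivate w huw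
  have hle : ∑ w ∈ G.neighborFinset u, x w ≤
      ∑ a ∈ E, x a + (x v + ∑ w ∈ (G.neighborFinset v).erase u, x w) := by
    rw [← Finset.sum_inter_add_sum_sdiff _ E, ← Finset.sum_insert (by simp)]
    gcongr
    · exact fun w _ _ ↦ (hpos w).le
    · exact Finset.inter_subset_right
    · exact fun w _ _ ↦ (hpos w).le
  have herase : ∑ w ∈ (G.neighborFinset v).erase u, x w + x u = (q - G.degree v) * x v := by
    rw [sub_degree_mul_eq_sum heig]
    exact Finset.sum_erase_add _ _ ((G.mem_neighborFinset v u).2 huv.symm)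
  have hdeg' : (G.degree u : ℝ) + 1 ≤ G.degree v := by exact_mod_cast hdeg
  have hq : 0 < q - G.degree v + 1 := by linarith [degree_lt_eigenvalue_of_adj hpos heig huv.symm]
  have hmul : (q - G.degree v + 1) * x u < (q - G.degree v + 1) * x v := by
    calc (q - G.degree v + 1) * x u
        ≤ (q - G.degree u) * x u := by
          gcongr
          · exact (hpos u).le
          · linarith
      _ < (q - G.degree v + 1) * x v := by
        linarith [sub_degree_mul_eq_sum heig u]
  exact lt_of_mul_lt_mul_left hmul hq.le

theorem card_le_card_add_degree {v : V} {s : Finset V} (hs : ∀ w ∉ s, G.Adj v w) :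
    Fintype.card V ≤ s.card + G.degree v := by
  classical
  rw [← G.card_neighborFinset_eq_degree, ← Finset.card_univ]
  refine (Finset.card_le_card fun w _ ↦ ?_).trans (Finset.card_union_le s (G.neighborFinset v))
  simpa [or_iff_not_imp_left] using hs w

/-- `vₗ` plays the role of `v_{n-1}`. -/
theorem stmt_13_general (hpos : ∀ v, 0 < x v)
    (heig : (signlessLaplacian G).mulVec x = q • x) {v₀ v₁ v₂ v₃ vₖ vₗ : V}
    (hne : [v₀, v₂, v₃, vₖ, vₗ].Nodup)
    (h0 : G.neighborSet v₀ = {v₁, vₗ}) (h1 : G.neighborSet v₁ = {v₀, v₂, v₃, vₖ, vₗ})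
    (h2 : G.neighborSet v₂ = {v₁, v₃}) (hk : {v₃, vₗ} ⊆ G.neighborSet vₖ)
    (hdeg : 5 < G.degree vₖ) : x v₁ < x vₖ := by
  classical
  have hN₀ : G.neighborFinset v₀ = {v₁, vₗ} := by simpa [← Finset.coe_inj] using h0
  have hN₁ : G.neighborFinset v₁ = {v₀, v₂, v₃, vₖ, vₗ} := by simpa [← Finset.coe_inj] using h1
  have hN₂ : G.neighborFinset v₂ = {v₁, v₃} := by simpa [← Finset.coe_inj] using h2
  have hadj : G.Adj v₁ vₖ := by simp [← G.mem_neighborFinset, hN₁]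
  have hdeg' : G.degree v₁ < G.degree vₖ := by
    rw [← G.card_neighborFinset_eq_degree, hN₁]
    exact Finset.card_le_five.trans_lt hdeg
  simp only [List.nodup_cons, List.mem_cons, List.not_mem_nil, not_or] at hne
  have tips : ∑ a ∈ {v₀, v₂}, x a < x v₁ := by
    apply sum_lt_of_triangle_tips (f := fun a ↦ if a = v₀ then vₗ else v₃) hpos heig hadj <;>
      grind [Set.InjOn]
  refine lt_of_adj_of_degree_lt_of_sum_lt hpos heig hadj hdeg' tips fun w hw ↦ ?_
  rw [← G.mem_neighborFinset, hN₁] at hw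
  grind [SimpleGraph.mem_neighborSet]

end PositiveEigenvector

/-- for the maximal outer-planar graph of type `D_2` with `Δ = n - 3`,
if `n ≥ 10` then the Perron eigenvector satisfies `x_k > x_1`. -/
theorem stmt_13 (n k : ℕ) (hn : 8 ≤ n) (hk1 : 4 ≤ k) (hk2 : k ≤ n - 3)
    (G : SimpleGraph (Fin n))
    (h0 : G.neighborSet ⟨0, by omega⟩ = {⟨1, by omega⟩, ⟨n - 1, by omega⟩})
    (h1 : G.neighborSet ⟨1, by omega⟩ =
      {⟨0, by omega⟩, ⟨2, by omega⟩, ⟨3, by omega⟩, ⟨k, by omega⟩, ⟨n - 1, by omega⟩})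
    (h2 : G.neighborSet ⟨2, by omega⟩ = {⟨1, by omega⟩, ⟨3, by omega⟩})
    (hlast : G.neighborSet ⟨n - 1, by omega⟩ =
      {⟨0, by omega⟩, ⟨1, by omega⟩, ⟨k, by omega⟩, ⟨n - 2, by omega⟩})
    (hk' : G.neighborSet ⟨k, by omega⟩ =
      insert ⟨1, by omega⟩ {u : Fin n | 3 ≤ u.val ∧ u ≠ ⟨k, by omega⟩})
    (x : Fin n → ℝ) (hpos : ∀ i, 0 < x i)
    (heig : (signlessLaplacian G).mulVec x = qIndex G • x)
    (hn10 : 10 ≤ n) :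
    x ⟨1, by omega⟩ < x ⟨k, by omega⟩ := by
  classical
  have hdeg : n ≤ 3 + G.degree ⟨k, by omega⟩ := by
    have hcard := card_le_card_add_degree (G := G) (v := ⟨k, by omega⟩)
      (s := {⟨0, by omega⟩, ⟨2, by omega⟩, ⟨k, by omega⟩}) fun w hw ↦ by
        rw [← G.mem_neighborSet, hk']
        grind
    rw [Fintype.card_fin] at hcard
    exact hcard.trans (Nat.add_le_add_right Finset.card_le_three _)
  refine stmt_13_general hpos heig ?_ h0 h1 h2 ?_ (by omega)
  · simp only [List.nodup_cons, List.mem_cons, List.not_mem_nil, List.nodup_nil, Fin.mk.injEq]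
    grind
  · rw [hk']
    grind
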